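/- arXiv:0711.4379 — 4 statements merged into one kernel-verified Lean document; each statement's English description precedes it below -/
import Mathlib

section
/- Let H be a complex Hilbert space, c : H → H a self-adjoint unitary (c* = c and c∘c = id), and let p, P : H → H be orthogonal projections each commuting with c (c∘p = p∘c and c∘P = P∘c). Suppose u₁, u₂, v₁, v₂ ∈ H satisfy: u₁ = c u₂; p u₁ = u₁; P v₁ = 0; p v₂ = 0; and the homogeneous system u₁ + v₁ + c v₂ = 0 and c v₁ − (1−P)(u₂ + v₂) = 0. Then u₁ = 0, u₂ = 0, v₁ = 0 and v₂ = 0. -/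
open ContinuousLinearMap

/-!
Applying `c` to the first equation gives `u₂ + v₂ = -c v₁`. Since `c` preserves `ker P`, the map
`1 - P` fixes `c v₁`, so the second equation becomes `2 • c v₁ = 0`, whence `v₁ = 0`. What remains
is `u₁ + c v₂ = 0`, where `u₁` is fixed by `p` and `c v₂` is annihilated by `p`, so both vanish.
-/

section EndomorphismKernels

variable {M F : Type*} [FunLike F M M]

theorem map_apply_eq_zero_of_commute [Zero M] [ZeroHomClass F M M] {c : F} {f : M → M} {x : M}
    (hcf : Function.Commute c f) (hx : f x = 0) : f (c x) = 0 := by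
  rw [← hcf.eq, hx, map_zero]

theorem eq_zero_of_map_eq_self_of_map_eq_zero_of_add_eq_zero [AddZeroClass M]
    [AddMonoidHomClass F M M] {f : F} {x y : M} (hx : f x = x) (hy : f y = 0) (hxy : x + y = 0) :
    x = 0 :=
  calc
    x = f x + f y := by rw [hx, hy, add_zero]
    _ = f (x + y) := (map_add f x y).symm
    _ = 0 := by rw [hxy, map_zero]

theorem eq_zero_of_map_eq_zero_of_eq_neg_sub_map_neg [AddCommGroup M] [AddMonoidHomClass F M M]
    (htwo : IsSMulRegular M (2 : ℕ)) {f : F} {x : M} (hfx : f x = 0) (hx : x = -x - f (-x)) :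
    x = 0 := by
  have hx_neg : x = -x := by rwa [map_neg, hfx, neg_zero, sub_zero] at hx
  refine htwo.right_eq_zero_of_smul ?_
  rw [two_nsmul, ← eq_neg_iff_add_eq_zero]
  exact hx_neg

theorem add_eq_neg_map_of_involutive [AddCommGroup M] [AddMonoidHomClass F M M] {c : F}
    (hc : Function.Involutive c) {x y z : M} (h : c x + y + c z = 0) : x + z = -c y := by
  have h_image : x + c y + z = 0 := by
    simpa only [map_add, hc x, hc z, map_zero] using congrArg c h
  rwa [add_right_comm, ← eq_neg_iff_add_eq_zero] at h_image

end EndomorphismKernels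

theorem statement1_general {M F : Type*} [AddCommGroup M] [FunLike F M M]
    [AddMonoidHomClass F M M] (htwo : IsSMulRegular M (2 : ℕ)) (c p P : F)
    (hc : Function.Involutive c) (hcp : Function.Commute c p) (hcP : Function.Commute c P)
    {u₁ u₂ v₁ v₂ : M}
    (hu : u₁ = c u₂) (hpu : p u₁ = u₁) (hPv : P v₁ = 0) (hpv : p v₂ = 0)
    (heq1 : u₁ + v₁ + c v₂ = 0) (heq2 : c v₁ - (u₂ + v₂ - P (u₂ + v₂)) = 0) :
    u₁ = 0 ∧ u₂ = 0 ∧ v₁ = 0 ∧ v₂ = 0 := by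
  have eq_zero_of_map {x : M} : c x = 0 → x = 0 := (map_eq_zero_iff c hc.injective).mp
  have h_sum : u₂ + v₂ = -c v₁ := add_eq_neg_map_of_involutive hc (hu ▸ heq1)
  have hv₁ : v₁ = 0 := by
    rw [h_sum, sub_eq_zero] at heq2
    exact eq_zero_of_map <| eq_zero_of_map_eq_zero_of_eq_neg_sub_map_neg htwo
      (map_apply_eq_zero_of_commute hcP hPv) heq2
  rw [hv₁, add_zero] at heq1
  have hu₁ : u₁ = 0 := eq_zero_of_map_eq_self_of_map_eq_zero_of_add_eq_zero hpu
    (map_apply_eq_zero_of_commute hcp hpv) heq1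
  rw [hu₁, zero_add] at heq1
  exact ⟨hu₁, eq_zero_of_map (hu ▸ hu₁), hv₁, eq_zero_of_map heq1⟩

/-- Triviality of the kernel of the operator-valued symbol `σ_X` of the
boundary reduction of the edge boundary value problem (system (sistema1), Part A). -/
theorem statement1 {H : Type*} [NormedAddCommGroup H] [InnerProductSpace ℂ H] [CompleteSpace H]
    (c p P : H →L[ℂ] H)
    (hc_sa : ContinuousLinearMap.adjoint c = c) (hc2 : c ∘L c = 1)
    (hp_sa : ContinuousLinearMap.adjoint p = p) (hp2 : p ∘L p = p)
    (hP_sa : ContinuousLinearMap.adjoint P = P) (hP2 : P ∘L P = P)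
    (hcp : c ∘L p = p ∘L c) (hcP : c ∘L P = P ∘L c)
    (u₁ u₂ v₁ v₂ : H)
    (hu : u₁ = c u₂) (hpu : p u₁ = u₁) (hPv : P v₁ = 0) (hpv : p v₂ = 0)
    (heq1 : u₁ + v₁ + c v₂ = 0)
    (heq2 : c v₁ - ((1 : H →L[ℂ] H) - P) (u₂ + v₂) = 0) :
    u₁ = 0 ∧ u₂ = 0 ∧ v₁ = 0 ∧ v₂ = 0 := by
  have : IsAddTorsionFree H := .of_isTorsionFree ℂ H
  exact statement1_general (IsAddTorsionFree.nsmul_right_injective two_ne_zero) c p P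
    (DFunLike.congr_fun hc2) (DFunLike.congr_fun hcp) (DFunLike.congr_fun hcP)
    hu hpu hPv hpv heq1 heq2
end

section
/- Let H be a complex Hilbert space, c : H → H a self-adjoint unitary (c* = c and c∘c = id), and let p, P : H → H be orthogonal projections each commuting with c (c∘p = p∘c and c∘P = P∘c). Then for every g₁ ∈ H and every g₂ ∈ H with P g₂ = 0 there exist u₁, v₁, v₂ ∈ H with p u₁ = u₁, P v₁ = 0 and p v₂ = 0 such that, setting u₂ := c u₁, one has u₁ + v₁ + c v₂ = g₁ and c v₁ − (1−P)(u₂ + v₂) = g₂. -/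
open ContinuousLinearMap

/-!
Put `w = g₁ - v₁`. As `c² = 1`, the equation `u₁ + c v₂ = w` gives `c u₁ + v₂ = c w`, so the second
equation involves only `v₁`. On `ker P`, which `c` preserves, `2 - P` is multiplication by `2`, and
the second equation becomes `2 v₁ = (1 - P) g₁ + c g₂`. Finally `w` is split by `p`.
-/

section Module

variable {R M : Type*} [Ring R] [AddCommGroup M] [Module R M] {c p P : Module.End R M}

theorem exists_fixed_add_involution_ker_eq (hc : c * c = 1) (hp : IsIdempotentElem p)
    (hcp : Commute c p) (w : M) : ∃ u v : M, p u = u ∧ p v = 0 ∧ u + c v = w := by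
  have c_c (x : M) : c (c x) = x := LinearMap.congr_fun hc x
  have p_p (x : M) : p (p x) = p x := LinearMap.congr_fun hp x
  have p_c (x : M) : p (c x) = c (p x) := LinearMap.congr_fun hcp.eq.symm x
  refine ⟨p w, c (w - p w), p_p w, ?_, ?_⟩
  · rw [p_c, map_sub, p_p, sub_self, map_zero]
  · rw [c_c, add_sub_cancel]

theorem involution_apply_add_eq (hc : c * c = 1) {u v w : M} (h : u + c v = w) :
    c u + v = c w := by
  have c_c_v : c (c v) = v := LinearMap.congr_fun hc v
  rw [← h, map_add, c_c_v]

theorem exists_ker_involution_apply_sub_eq [Invertible (2 : R)] (hc : c * c = 1)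
    (hP : IsIdempotentElem P) (hcP : Commute c P) (g₁ : M) {g₂ : M} (hg₂ : P g₂ = 0) :
    ∃ v : M, P v = 0 ∧ c v - (1 - P) (c (g₁ - v)) = g₂ := by
  have c_c (x : M) : c (c x) = x := LinearMap.congr_fun hc x
  have P_P (x : M) : P (P x) = P x := LinearMap.congr_fun hP x
  have P_c (x : M) : P (c x) = c (P x) := LinearMap.congr_fun hcP.eq.symm x
  obtain ⟨v, two_v⟩ : ∃ v : M, (2 : R) • v = g₁ - P g₁ + c g₂ :=
    ⟨⅟(2 : R) • (g₁ - P g₁ + c g₂), smul_invOf_smul _ _⟩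
  have P_v : P v = 0 := by
    rw [← invOf_smul_smul (2 : R) v, two_v]
    simp only [map_smul, map_add, map_sub, P_P, P_c, hg₂, sub_self, map_zero, add_zero, smul_zero]
  have two_c_v : c v + c v = c g₁ - c (P g₁) + g₂ := by
    rw [← two_smul R, ← map_smul, two_v, map_add, map_sub, c_c]
  refine ⟨v, P_v, ?_⟩
  calc c v - (1 - P) (c (g₁ - v))
      = (c v + c v) - (c g₁ - c (P g₁)) := by
        simp only [LinearMap.sub_apply, Module.End.one_apply, map_sub, P_c, P_v, map_zero]
        abel
    _ = g₂ := by rw [two_c_v, add_sub_cancel_left]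

theorem statement2_general [Invertible (2 : R)] (hc : c * c = 1) (hp : IsIdempotentElem p)
    (hP : IsIdempotentElem P) (hcp : Commute c p) (hcP : Commute c P) (g₁ g₂ : M)
    (hg₂ : P g₂ = 0) :
    ∃ u₁ v₁ v₂ : M, p u₁ = u₁ ∧ P v₁ = 0 ∧ p v₂ = 0 ∧
      u₁ + v₁ + c v₂ = g₁ ∧ c v₁ - (1 - P) (c u₁ + v₂) = g₂ := by
  obtain ⟨v₁, P_v₁, hv₁⟩ := exists_ker_involution_apply_sub_eq hc hP hcP g₁ hg₂
  obtain ⟨u₁, v₂, p_u₁, p_v₂, hw⟩ := exists_fixed_add_involution_ker_eq hc hp hcp (g₁ - v₁)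
  refine ⟨u₁, v₁, v₂, p_u₁, P_v₁, p_v₂, ?_, ?_⟩
  · rw [add_right_comm, hw, sub_add_cancel]
  · rw [involution_apply_add_eq hc hw, hv₁]

end Module

/-- Triviality of the cokernel (surjectivity) of the operator-valued symbol
`σ_X` of the boundary reduction of the edge boundary value problem (system (sistema1),
Part A of the proof of the Fredholm property). -/
theorem statement2 {H : Type*} [NormedAddCommGroup H] [InnerProductSpace ℂ H] [CompleteSpace H]
    (c p P : H →L[ℂ] H)
    (hc_sa : ContinuousLinearMap.adjoint c = c) (hc2 : c ∘L c = 1)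
    (hp_sa : ContinuousLinearMap.adjoint p = p) (hp2 : p ∘L p = p)
    (hP_sa : ContinuousLinearMap.adjoint P = P) (hP2 : P ∘L P = P)
    (hcp : c ∘L p = p ∘L c) (hcP : c ∘L P = P ∘L c) :
    ∀ g₁ g₂ : H, P g₂ = 0 →
      ∃ u₁ v₁ v₂ : H, p u₁ = u₁ ∧ P v₁ = 0 ∧ p v₂ = 0 ∧
        u₁ + v₁ + c v₂ = g₁ ∧
        c v₁ - ((1 : H →L[ℂ] H) - P) (c u₁ + v₂) = g₂ := by
  exact statement2_general (c := c.toLinearMap) (congrArg toLinearMap hc2)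
    (congrArg toLinearMap hp2) (congrArg toLinearMap hP2) (congrArg toLinearMap hcp)
    (congrArg toLinearMap hcP)
end

section
/- Let W be a complex Hilbert space, and let r, t be real numbers with r > 0, t > 0 and r² + t² = 1. Let a, c : W → W be bounded self-adjoint operators with a∘a = r²·id, c∘c = t²·id and a∘c = c∘a, and let p be an orthogonal projection on W commuting with both a and c. Set π₊ := (2r)⁻¹(r·id + a) (the positive spectral projection of a; it is an orthogonal projection commuting with p). Suppose u₁, u₂, v₁, v₂ ∈ W satisfy: p u₁ = u₁ and p u₂ = u₂; the range conditions (1+a)u₁ + c u₂ = 2u₁ and c u₁ + (1−a)u₂ = 2u₂; p π₊ v₁ = 0; p v₂ = 0; and the homogeneous equations u₁ + v₁ + c v₂ = 0 and c v₁ − (1 − pπ₊)(u₂ + v₂) = 0. Then u₁ = 0, u₂ = 0, v₁ = 0 and v₂ = 0. -/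
open ContinuousLinearMap

/-!
Split the system along `p` and `1 - p`. The `1 - p` part of the second equation becomes
`(1 + t²) v₂ = 0`. On the `p` part, `v₁` has component `-u₁`, so `π₊ u₁ = 0`, that is
`a u₁ = -r u₁`, and `c u₁ = -(1 - π₊) u₂`. Applying `c` to the latter and inserting the range
condition `c u₂ = (1 - a) u₁` gives `t² u₁ = -(1 + r) u₁`, hence `u₁ = 0`. Then `π₊ u₂ = u₂`, that
is `a u₂ = r u₂`, whereas the other range condition says `a u₂ = -u₂`, hence `u₂ = 0`.
-/

/-- The homogeneous system defining the kernel of the boundary symbol, for a projection `p`, the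
Clifford multiplication `c` and the symbol `π` of the spectral projection. The condition that
`(u₁, u₂)` lies in the range of `σ(Q)` is not included. -/
structure BoundarySystem {R V : Type*} [Ring R] [AddCommGroup V] [Module R V]
    (p c π : Module.End R V) (u₁ u₂ v₁ v₂ : V) : Prop where
  p_u₁ : p u₁ = u₁
  p_u₂ : p u₂ = u₂
  p_π_v₁ : p (π v₁) = 0
  p_v₂ : p v₂ = 0
  eq₁ : u₁ + v₁ + c v₂ = 0
  eq₂ : c v₁ - (1 - p * π) (u₂ + v₂) = 0

namespace BoundarySystem

variable {R V : Type*} [Ring R] [AddCommGroup V] [Module R V]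
  {p c π a : Module.End R V} {u₁ u₂ v₁ v₂ : V}

theorem p_v₁_eq_neg (h : BoundarySystem p c π u₁ u₂ v₁ v₂) (hpc : Commute p c) : p v₁ = -u₁ := by
  have hpcv₂ : p (c v₂) = 0 := by
    rw [← Module.End.mul_apply, hpc.eq, Module.End.mul_apply, h.p_v₂, map_zero]
  have hp_eq₁ : p (u₁ + v₁ + c v₂) = 0 := by rw [h.eq₁, map_zero]
  rw [map_add, map_add, h.p_u₁, hpcv₂, add_zero] at hp_eq₁
  exact eq_neg_of_add_eq_zero_right hp_eq₁

theorem π_u₁_eq_zero (h : BoundarySystem p c π u₁ u₂ v₁ v₂) (hpc : Commute p c)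
    (hpπ : Commute p π) : π u₁ = 0 := by
  have hπpv₁ : π (p v₁) = 0 := by
    rw [← Module.End.mul_apply, ← hpπ.eq, Module.End.mul_apply, h.p_π_v₁]
  rwa [h.p_v₁_eq_neg hpc, map_neg, neg_eq_zero] at hπpv₁

theorem c_v₁_eq_sub (h : BoundarySystem p c π u₁ u₂ v₁ v₂) (hpπ : Commute p π) :
    c v₁ = u₂ + v₂ - π u₂ := by
  have hpπuv : (p * π) (u₂ + v₂) = π u₂ := by
    rw [hpπ.eq, Module.End.mul_apply, map_add, h.p_u₂, h.p_v₂, add_zero]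
  rw [sub_eq_zero.mp h.eq₂, LinearMap.sub_apply, hpπuv, Module.End.one_apply]

theorem c_u₁_eq_sub (h : BoundarySystem p c π u₁ u₂ v₁ v₂) (hpc : Commute p c)
    (hpπ : Commute p π) : c u₁ = π u₂ - u₂ := by
  have hpπu₂ : p (π u₂) = π u₂ := by
    rw [← Module.End.mul_apply, hpπ.eq, Module.End.mul_apply, h.p_u₂]
  rw [← neg_inj, neg_sub]
  calc
    -c u₁ = c (p v₁) := by rw [h.p_v₁_eq_neg hpc, map_neg]
    _ = p (c v₁) := (LinearMap.congr_fun hpc.eq v₁).symm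
    _ = u₂ - π u₂ := by rw [h.c_v₁_eq_sub hpπ, map_sub, map_add, h.p_u₂, h.p_v₂, hpπu₂, add_zero]

theorem v₁_eq_sub (h : BoundarySystem p c π u₁ u₂ v₁ v₂) : v₁ = -u₁ - c v₂ := by
  linear_combination (norm := abel) h.eq₁

theorem c_c_v₂_eq_neg (h : BoundarySystem p c π u₁ u₂ v₁ v₂) (hpc : Commute p c)
    (hpπ : Commute p π) : c (c v₂) = -v₂ := by
  have hc_v₁ : c v₁ = -c u₁ - c (c v₂) := by rw [← map_neg, ← map_sub, ← h.v₁_eq_sub]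
  rw [h.c_v₁_eq_sub hpπ, h.c_u₁_eq_sub hpc hpπ] at hc_v₁
  linear_combination (norm := abel) hc_v₁

theorem c_c_u₁_eq_sub (h : BoundarySystem p c π u₁ u₂ v₁ v₂) (hpc : Commute p c)
    (hpπ : Commute p π) (hcπ : Commute c π) (haπ : Commute a π)
    (hc_u₂ : c u₂ = u₁ - a u₁) : c (c u₁) = a u₁ - u₁ := by
  have hπau₁ : π (a u₁) = 0 := by
    rw [← Module.End.mul_apply, ← haπ.eq, Module.End.mul_apply, h.π_u₁_eq_zero hpc hpπ, map_zero]
  calc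
    c (c u₁) = c (π u₂) - c u₂ := by rw [h.c_u₁_eq_sub hpc hpπ, map_sub]
    _ = π (c u₂) - c u₂ := by rw [← Module.End.mul_apply, hcπ.eq, Module.End.mul_apply]
    _ = a u₁ - u₁ := by
      rw [hc_u₂, map_sub, h.π_u₁_eq_zero hpc hpπ, hπau₁, sub_zero, zero_sub, neg_sub]

end BoundarySystem

section Field

variable {K V : Type*} [Field K] [AddCommGroup V] [Module K V]

/-- The operator `(2r)⁻¹ (r + a)`. When `a² = r²` and `2r ≠ 0` it is the projection onto the
eigenspace of `a` for `r` along the eigenspace for `-r`. -/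
def posSpectralProj (r : K) (a : Module.End K V) : Module.End K V :=
  (2 * r)⁻¹ • (r • 1 + a)

variable {r s : K} {a c p : Module.End K V} {x : V}

theorem posSpectralProj_apply_eq_zero_iff (hr : 2 * r ≠ 0) :
    posSpectralProj r a x = 0 ↔ a x = -(r • x) := by
  rw [posSpectralProj, LinearMap.smul_apply, smul_eq_zero_iff_right (inv_ne_zero hr),
    eq_neg_iff_add_eq_zero, add_comm (a x)]
  rfl

theorem posSpectralProj_apply_eq_self_iff (hr : 2 * r ≠ 0) :
    posSpectralProj r a x = x ↔ a x = r • x := by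
  rw [posSpectralProj, LinearMap.smul_apply, inv_smul_eq_iff₀ hr, two_mul, add_smul]
  exact add_right_inj (r • x)

theorem commute_posSpectralProj {b : Module.End K V} (hba : Commute b a) :
    Commute b (posSpectralProj r a) :=
  (((Commute.one_right b).smul_right r).add_right hba).smul_right _

theorem statement4_general (hr : 2 * r ≠ 0) (hr1 : 1 + r ≠ 0) (hs1 : 1 + s ≠ 0)
    (hrs1 : 1 + r + s ≠ 0) (hcc : c * c = s • 1) (hac : Commute a c)
    (hpa : Commute p a) (hpc : Commute p c) {u₁ u₂ v₁ v₂ : V}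
    (h : BoundarySystem p c (posSpectralProj r a) u₁ u₂ v₁ v₂)
    (hQ₁ : u₁ + a u₁ + c u₂ = (2 : K) • u₁) (hQ₂ : c u₁ + (u₂ - a u₂) = (2 : K) • u₂) :
    u₁ = 0 ∧ u₂ = 0 ∧ v₁ = 0 ∧ v₂ = 0 := by
  have hcc_apply (x : V) : c (c x) = s • x := LinearMap.congr_fun hcc x
  have hpπ : Commute p (posSpectralProj r a) := commute_posSpectralProj hpa
  have hv₂ : v₂ = 0 := by
    have hc_c_v₂ := h.c_c_v₂_eq_neg hpc hpπ
    rw [hcc_apply] at hc_c_v₂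
    refine (smul_eq_zero_iff_right hs1).mp ?_
    linear_combination (norm := module) hc_c_v₂
  have hu₁ : u₁ = 0 := by
    have ha_u₁ : a u₁ = -(r • u₁) :=
      (posSpectralProj_apply_eq_zero_iff hr).mp (h.π_u₁_eq_zero hpc hpπ)
    have hc_u₂ : c u₂ = u₁ - a u₁ := by linear_combination (norm := module) hQ₁
    have hc_c_u₁ := h.c_c_u₁_eq_sub hpc hpπ (commute_posSpectralProj hac.symm)
      (commute_posSpectralProj (Commute.refl a)) hc_u₂
    rw [hcc_apply, ha_u₁] at hc_c_u₁
    refine (smul_eq_zero_iff_right hrs1).mp ?_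
    linear_combination (norm := module) hc_c_u₁
  have hu₂ : u₂ = 0 := by
    have hc_u₁ := h.c_u₁_eq_sub hpc hpπ
    rw [hu₁, map_zero, eq_comm, sub_eq_zero, posSpectralProj_apply_eq_self_iff hr] at hc_u₁
    rw [hu₁, map_zero, hc_u₁] at hQ₂
    refine (smul_eq_zero_iff_right hr1).mp ?_
    linear_combination (norm := module) -hQ₂
  exact ⟨hu₁, hu₂, by simp [h.v₁_eq_sub, hu₁, hv₂], hv₂⟩

end Field

/-- Triviality of the kernel of the principal symbol `σ_{∂M}` of the
boundary reduction of the edge boundary value problem at a cotangent point `(ξ,η)` with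
`ξ ≠ 0`, `η ≠ 0`, `|ξ|² + |η|² = 1` (system (sistema2)/(sistema3), Part B). -/
theorem statement4 {W : Type*} [NormedAddCommGroup W] [InnerProductSpace ℂ W] [CompleteSpace W]
    (r t : ℝ) (hr : 0 < r) (ht : 0 < t) (hrt : r ^ 2 + t ^ 2 = 1)
    (a c p : W →L[ℂ] W)
    (ha_sa : ContinuousLinearMap.adjoint a = a) (hc_sa : ContinuousLinearMap.adjoint c = c)
    (haa : a ∘L a = ((r ^ 2 : ℝ) : ℂ) • (1 : W →L[ℂ] W))
    (hcc : c ∘L c = ((t ^ 2 : ℝ) : ℂ) • (1 : W →L[ℂ] W))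
    (hac : a ∘L c = c ∘L a)
    (hp_sa : ContinuousLinearMap.adjoint p = p) (hp2 : p ∘L p = p)
    (hpa : p ∘L a = a ∘L p) (hpc : p ∘L c = c ∘L p)
    (πplus : W →L[ℂ] W)
    (hπ : πplus = ((2 * r : ℝ) : ℂ)⁻¹ • (((r : ℝ) : ℂ) • (1 : W →L[ℂ] W) + a))
    (u₁ u₂ v₁ v₂ : W)
    (hpu₁ : p u₁ = u₁) (hpu₂ : p u₂ = u₂)
    (hQ₁ : u₁ + a u₁ + c u₂ = (2 : ℂ) • u₁)
    (hQ₂ : c u₁ + (u₂ - a u₂) = (2 : ℂ) • u₂)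
    (hv₁ : p (πplus v₁) = 0) (hv₂ : p v₂ = 0)
    (heq1 : u₁ + v₁ + c v₂ = 0)
    (heq2 : c v₁ - ((1 : W →L[ℂ] W) - p ∘L πplus) (u₂ + v₂) = 0) :
    u₁ = 0 ∧ u₂ = 0 ∧ v₁ = 0 ∧ v₂ = 0 := by
  have hr0 : (2 : ℂ) * r ≠ 0 := mul_ne_zero two_ne_zero (Complex.ofReal_ne_zero.mpr hr.ne')
  have hr1 : (1 : ℂ) + r ≠ 0 := mod_cast (by positivity : 1 + r ≠ 0)
  have ht1 : (1 : ℂ) + (t ^ 2 : ℝ) ≠ 0 := mod_cast (by positivity : 1 + t ^ 2 ≠ 0)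
  have hrt1 : (1 : ℂ) + r + (t ^ 2 : ℝ) ≠ 0 := mod_cast (by positivity : 1 + r + t ^ 2 ≠ 0)
  have hπ_eq : (πplus : Module.End ℂ W) = posSpectralProj (r : ℂ) (a : Module.End ℂ W) := by
    rw [hπ, Complex.ofReal_mul]; rfl
  have hsys : BoundarySystem (p : Module.End ℂ W) c πplus u₁ u₂ v₁ v₂ :=
    ⟨hpu₁, hpu₂, hv₁, hv₂, heq1, heq2⟩
  exact statement4_general hr0 hr1 ht1 hrt1 (congrArg toLinearMap hcc) (congrArg toLinearMap hac)
    (congrArg toLinearMap hpa) (congrArg toLinearMap hpc) (hπ_eq ▸ hsys) hQ₁ hQ₂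
end

section
/- Let W be a complex Hilbert space, and let r, t be real numbers with r > 0, t > 0 and r² + t² = 1. Let a, c : W → W be bounded self-adjoint operators with a∘a = r²·id, c∘c = t²·id and a∘c = c∘a, and let p be an orthogonal projection on W commuting with both a and c. Set π₊ := (2r)⁻¹(r·id + a). Suppose u₁, u₂, v₁, v₂ ∈ W satisfy p u₁ = u₁, c u₂ = (1−a)u₁, p π₊ v₁ = 0, p v₂ = 0, and the first equation u₁ + v₁ + c v₂ = 0. Then the second equation c v₁ − (1 − pπ₊)(u₂ + v₂) = 0 holds if and only if (1 + t²) v₁ + (1 − π₊)(a u₁) = 0. -/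
open ContinuousLinearMap

/-!
Apply `c` to the left-hand side of the second equation. Since `c` commutes with `1 - p π₊`, and the
first equation together with `c u₂ = (1 - a) u₁` gives `c (u₂ + v₂) = -(a u₁ + v₁)`, the result is
`c² v₁ + (1 - p π₊) (a u₁ + v₁)`. Here `p π₊` kills `v₁` and acts as `π₊` on `a u₁`, so this is the
left-hand side of the claimed equation. As `c² = t²` is invertible, applying `c` loses nothing.
-/

theorem isSMulRegular_of_comp_self_eq_smul_one {K V : Type*} [CommSemiring K] [AddCommMonoid V]
    [TopologicalSpace V] [ContinuousAdd V] [Module K V] [ContinuousConstSMul K V]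
    {c : V →L[K] V} {s : K} (hs : IsSMulRegular V s) (hcc : c ∘L c = s • (1 : V →L[K] V)) :
    IsSMulRegular V c :=
  .of_mul (a := c) fun x y hxy ↦ hs (by simpa [ContinuousLinearMap.mul_def, hcc] using hxy)

section

variable {A M : Type*} [Ring A] [AddCommGroup M] [Module A M]

theorem commute_smul_smul_one_add {K : Type*} [CommSemiring K] [Algebra K A] {a b : A}
    (hba : Commute b a) (k l : K) : Commute b (k • (l • (1 : A) + a)) :=
  (((Commute.one_right b).smul_right l).add_right hba).smul_right k

theorem smul_add_eq_neg_smul_add {a c : A} {u₁ u₂ v₁ v₂ : M} (hcu₂ : c • u₂ = u₁ - a • u₁)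
    (heq1 : u₁ + v₁ + c • v₂ = 0) : c • (u₂ + v₂) = -(a • u₁ + v₁) := by
  rw [smul_add, hcu₂, eq_neg_iff_add_eq_zero, ← heq1]
  abel

theorem one_sub_mul_smul_add_of_smul_eq_self {p π : A} {x y : M} (hpπ : Commute p π)
    (hx : p • x = x) (hy : p • π • y = 0) : (1 - p * π) • (x + y) = x - π • x + y := by
  have mul_smul_x : (p * π) • x = π • x := by rw [hpπ.eq, mul_smul, hx]
  have mul_smul_y : (p * π) • y = 0 := by rw [mul_smul, hy]
  rw [sub_smul, one_smul, smul_add, mul_smul_x, mul_smul_y]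
  abel

theorem smul_smul_sub_one_sub_mul_smul_add {a c p π : A} {u₁ u₂ v₁ v₂ : M}
    (hcπ : Commute c π) (hpπ : Commute p π) (hpa : Commute p a) (hpc : Commute p c)
    (hpu₁ : p • u₁ = u₁) (hcu₂ : c • u₂ = u₁ - a • u₁) (hv₁ : p • π • v₁ = 0)
    (heq1 : u₁ + v₁ + c • v₂ = 0) :
    c • (c • v₁ - (1 - p * π) • (u₂ + v₂)) = (1 + c * c) • v₁ + (a • u₁ - π • a • u₁) := by
  have hpau₁ : p • a • u₁ = a • u₁ := by rw [← mul_smul, hpa.eq, mul_smul, hpu₁]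
  have c_comm : Commute c (1 - p * π) :=
    (Commute.one_right c).sub_right (hpc.symm.mul_right hcπ)
  calc c • (c • v₁ - (1 - p * π) • (u₂ + v₂))
      = (c * c) • v₁ - (1 - p * π) • c • (u₂ + v₂) := by
        rw [smul_sub, ← mul_smul, ← mul_smul, c_comm.eq, mul_smul (1 - p * π)]
    _ = (c * c) • v₁ + (1 - p * π) • (a • u₁ + v₁) := by
        rw [smul_add_eq_neg_smul_add hcu₂ heq1, smul_neg, sub_neg_eq_add]
    _ = (c * c) • v₁ + (a • u₁ - π • a • u₁ + v₁) := by
        rw [one_sub_mul_smul_add_of_smul_eq_self hpπ hpau₁ hv₁]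
    _ = (1 + c * c) • v₁ + (a • u₁ - π • a • u₁) := by
        rw [add_smul, one_smul]
        abel

theorem statement5_general {a c p π : A} {u₁ u₂ v₁ v₂ : M} (hc : IsSMulRegular M c)
    (hcπ : Commute c π) (hpπ : Commute p π) (hpa : Commute p a) (hpc : Commute p c)
    (hpu₁ : p • u₁ = u₁) (hcu₂ : c • u₂ = u₁ - a • u₁) (hv₁ : p • π • v₁ = 0)
    (heq1 : u₁ + v₁ + c • v₂ = 0) :
    c • v₁ - (1 - p * π) • (u₂ + v₂) = 0 ↔ (1 + c * c) • v₁ + (a • u₁ - π • a • u₁) = 0 := by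
  rw [← smul_smul_sub_one_sub_mul_smul_add hcπ hpπ hpa hpc hpu₁ hcu₂ hv₁ heq1]
  exact ⟨fun h ↦ by rw [h, smul_zero], hc.right_eq_zero_of_smul⟩

end

/-- The intermediate equivalence in Part B of the proof of the Fredholm
property: the second equation of system (sistema3) is equivalent to
`(1 + |ξ|²) v₁ + (1 − σ(Π₊)(η)) c_Ω(η) u₁ = 0`. -/
theorem statement5 {W : Type*} [NormedAddCommGroup W] [InnerProductSpace ℂ W] [CompleteSpace W]
    (r t : ℝ) (hr : 0 < r) (ht : 0 < t) (hrt : r ^ 2 + t ^ 2 = 1)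
    (a c p : W →L[ℂ] W)
    (ha_sa : ContinuousLinearMap.adjoint a = a) (hc_sa : ContinuousLinearMap.adjoint c = c)
    (haa : a ∘L a = ((r ^ 2 : ℝ) : ℂ) • (1 : W →L[ℂ] W))
    (hcc : c ∘L c = ((t ^ 2 : ℝ) : ℂ) • (1 : W →L[ℂ] W))
    (hac : a ∘L c = c ∘L a)
    (hp_sa : ContinuousLinearMap.adjoint p = p) (hp2 : p ∘L p = p)
    (hpa : p ∘L a = a ∘L p) (hpc : p ∘L c = c ∘L p)
    (πplus : W →L[ℂ] W)
    (hπ : πplus = ((2 * r : ℝ) : ℂ)⁻¹ • (((r : ℝ) : ℂ) • (1 : W →L[ℂ] W) + a))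
    (u₁ u₂ v₁ v₂ : W)
    (hpu₁ : p u₁ = u₁) (hcu₂ : c u₂ = u₁ - a u₁)
    (hv₁ : p (πplus v₁) = 0) (hv₂ : p v₂ = 0)
    (heq1 : u₁ + v₁ + c v₂ = 0) :
    c v₁ - ((1 : W →L[ℂ] W) - p ∘L πplus) (u₂ + v₂) = 0 ↔
      ((1 + t ^ 2 : ℝ) : ℂ) • v₁ + (a u₁ - πplus (a u₁)) = 0 := by
  have hc : IsSMulRegular W c := isSMulRegular_of_comp_self_eq_smul_one
    (.of_ne_zero (Complex.ofReal_ne_zero.2 (pow_pos ht 2).ne')) hcc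
  simpa [add_smul, ContinuousLinearMap.mul_def, hcc, -smul_add, -map_add] using
    statement5_general hc (hπ ▸ commute_smul_smul_one_add hac.symm _ _)
      (hπ ▸ commute_smul_smul_one_add hpa _ _) hpa hpc hpu₁ hcu₂ hv₁ heq1
end
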